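/- Let A be a unital C*-algebra and let s, t ∈ A be isometries (s* s = 1 and t* t = 1) such that s* t = q t s* for some q ∈ ℂ with |q| = 1. Then t s = q s t. -/

import Mathlib

/-!
The products `t * s` and `q • (s * t)` are both isometries, and the adjoint of the commutation
relation, `star t * s = star q • (s * star t)`, gives `star (t * s) * (q • (s * t)) = 1`. Two
isometries `u`, `v` with `star u * v = 1` coincide, because
`star (u - v) * (u - v) = 1 - 1 - 1 + 1 = 0`.
-/

theorem mem_unitary_of_norm_eq_one {𝕜 : Type*} [RCLike 𝕜] {z : 𝕜} (hz : ‖z‖ = 1) :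
    z ∈ unitary 𝕜 := by
  rw [Unitary.mem_iff_star_mul_self, RCLike.star_def, RCLike.conj_mul, hz, RCLike.ofReal_one,
    one_pow]

theorem eq_of_star_mul_self_eq_star_mul {A : Type*} [NonUnitalRing A] [StarRing A]
    (proper : ∀ a : A, star a * a = 0 → a = 0) {u v : A}
    (hu : star u * u = star u * v) (hv : star v * v = star u * v) : u = v := by
  have hvu : star v * u = star u * v := by
    rw [← star_star_mul, ← hu, star_star_mul]
  refine sub_eq_zero.mp (proper _ ?_)
  rw [star_sub, sub_mul, mul_sub, mul_sub, hu, hv, hvu, sub_self]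

theorem star_mul_self_mul_eq_one {A : Type*} [Monoid A] [StarMul A] {a b : A}
    (ha : star a * a = 1) (hb : star b * b = 1) : star (a * b) * (a * b) = 1 := by
  rw [star_mul, mul_assoc, ← mul_assoc (star a), ha, one_mul, hb]

theorem star_mul_eq_star_smul_mul_star {R A : Type*} [Star R] [Mul A] [StarMul A] [SMul R A]
    [StarModule R A] {q : R} {s t : A} (hst : star s * t = q • (t * star s)) :
    star t * s = star q • (s * star t) := by
  simpa only [star_mul, star_star, star_smul] using congrArg star hst

section Scalars

variable {R A : Type*} [Monoid R] {q : R}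

theorem star_mul_self_smul_eq_one [Star R] [MulOneClass A] [Star A] [MulAction R A]
    [IsScalarTower R A A] [SMulCommClass R A A] [StarModule R A] {a : A}
    (hq : star q * q = 1) (ha : star a * a = 1) : star (q • a) * (q • a) = 1 := by
  rw [star_smul, smul_mul_smul_comm, hq, ha, one_smul]

theorem star_mul_mul_smul_mul_eq_one [Star R] [Monoid A] [StarMul A] [MulAction R A]
    [IsScalarTower R A A] [SMulCommClass R A A] [StarModule R A] {s t : A} (hq : q * star q = 1)
    (hs : star s * s = 1) (ht : star t * t = 1) (hst : star s * t = q • (t * star s)) :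
    star (t * s) * (q • (s * t)) = 1 :=
  calc
    star (t * s) * (q • (s * t)) = q • (star s * (star t * s) * t) := by
      rw [star_mul, mul_smul_comm]
      simp only [mul_assoc]
    _ = (q * star q) • ((star s * s) * (star t * t)) := by
      rw [star_mul_eq_star_smul_mul_star hst, mul_smul_comm, smul_mul_assoc, smul_smul]
      simp only [mul_assoc]
    _ = 1 := by rw [hq, hs, ht, mul_one, one_smul]

theorem stmt_10_general [StarMul R] [Ring A] [StarRing A] [MulAction R A]
    [IsScalarTower R A A] [SMulCommClass R A A] [StarModule R A]
    (proper : ∀ a : A, star a * a = 0 → a = 0) (hq : q ∈ unitary R) {s t : A}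
    (hs : star s * s = 1) (ht : star t * t = 1) (hst : star s * t = q • (t * star s)) :
    t * s = q • (s * t) := by
  have hu : star (t * s) * (t * s) = 1 := star_mul_self_mul_eq_one ht hs
  have hv : star (q • (s * t)) * (q • (s * t)) = 1 :=
    star_mul_self_smul_eq_one (Unitary.star_mul_self_of_mem hq) (star_mul_self_mul_eq_one hs ht)
  have huv : star (t * s) * (q • (s * t)) = 1 :=
    star_mul_mul_smul_mul_eq_one (Unitary.mul_star_self_of_mem hq) hs ht hst
  exact eq_of_star_mul_self_eq_star_mul proper (hu.trans huv.symm) (hv.trans huv.symm)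

end Scalars

theorem stmt_10 {A : Type*} [NormedRing A] [StarRing A] [CStarRing A]
    [NormedAlgebra ℂ A] [StarModule ℂ A] [CompleteSpace A]
    (q : ℂ) (hq : ‖q‖ = 1) (s t : A)
    (hs : star s * s = 1) (ht : star t * t = 1)
    (hst : star s * t = q • (t * star s)) :
    t * s = q • (s * t) :=
  stmt_10_general (fun a => (CStarRing.star_mul_self_eq_zero_iff a).mp)
    (mem_unitary_of_norm_eq_one hq) hs ht hst
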